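/- arXiv:1210.3862 — 2 statements merged into one kernel-verified Lean document; each statement's English description precedes it below -/
import Mathlib

section
/- For all x ≥ 2 and Q ≥ 1, ∑_{q ≤ Q} (q/φ(q)) ∑_{χ primitive mod q} |ψ_K(x, χ∘N)|² ≪ (x + Q²)·x·log x, where the inner sum is over primitive Dirichlet characters χ modulo q, φ is Euler's totient function, and the implied constant depends only on K. -/
/-!
Setting: `K` is a number field, Galois over `ℚ`, with ring of integers `𝓞 K`.
We formalize the objects from Smith, "A generalization of the
Barban-Davenport-Halberstam Theorem to number fields".
-/

open NumberField Ideal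
open scoped Classical BigOperators

noncomputable section

/-- `𝔞` is a (positive) power of a nonzero prime ideal of `𝓞 K`. -/
def IsPrimeIdealPower {K : Type*} [Field K] [NumberField K] (𝔞 : Ideal (𝓞 K)) : Prop :=
  ∃ (𝔭 : Ideal (𝓞 K)) (m : ℕ), 𝔭.IsPrime ∧ 𝔭 ≠ ⊥ ∧ 1 ≤ m ∧ 𝔞 = 𝔭 ^ m

/-- The von Mangoldt function on ideals of `𝓞 K`: `Λ_K(𝔭^m) = log N𝔭`, and `0` otherwise.
(For `𝔞 = 𝔭^m` with `𝔭` prime, the radical of `𝔞` is `𝔭`.) -/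
def LambdaK (K : Type*) [Field K] [NumberField K] (𝔞 : Ideal (𝓞 K)) : ℝ :=
  if IsPrimeIdealPower 𝔞 then Real.log (absNorm 𝔞.radical) else 0

/-- `ψ_K(x; q, a) = ∑_{N𝔭^m ≤ x, N𝔭^m ≡ a (mod q)} log N𝔭`. -/
def psiK (K : Type*) [Field K] [NumberField K] (x : ℝ) (q : ℕ) (a : ZMod q) : ℝ :=
  ∑' 𝔞 : Ideal (𝓞 K),
    if (absNorm 𝔞 : ℝ) ≤ x ∧ ((absNorm 𝔞 : ZMod q) = a) then LambdaK K 𝔞 else 0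

/-- `G_q`: the image of `Gal(K(ζ_q)/K)` in `(ℤ/qℤ)ˣ` under restriction to `ℚ(ζ_q)` followed
by the canonical isomorphism `Gal(ℚ(ζ_q)/ℚ) ≅ (ℤ/qℤ)ˣ`; concretely, the range of the map
sending `σ ∈ Gal(K(ζ_q)/K)` to the exponent `a ∈ (ℤ/qℤ)ˣ` with `σ(ζ_q) = ζ_q^a`. -/
def Gq (K : Type*) [Field K] [NumberField K] (q : ℕ) : Subgroup (ZMod q)ˣ :=
  if h : 0 < q then
    haveI : NeZero q := ⟨h.ne'⟩
    haveI : NeZero (((⟨q, h⟩ : ℕ+) : ℕ) : K) := ⟨Nat.cast_ne_zero.mpr h.ne'⟩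
    ((IsCyclotomicExtension.zeta_spec (⟨q, h⟩ : ℕ+) K
        (CyclotomicField (⟨q, h⟩ : ℕ+) K)).autToPow K).range
  else ⊥

/-- `φ_K(q) = |G_q|`. -/
def phiK (K : Type*) [Field K] [NumberField K] (q : ℕ) : ℕ :=
  Nat.card (Gq K q)

/-- `ψ_K(x, χ∘N) = ∑_{N𝔞 ≤ x} χ(N𝔞) Λ_K(𝔞)`. -/
def psiKChi (K : Type*) [Field K] [NumberField K] (x : ℝ) {q : ℕ}
    (χ : DirichletCharacter ℂ q) : ℂ :=
  ∑' 𝔞 : Ideal (𝓞 K),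
    if (absNorm 𝔞 : ℝ) ≤ x then χ (absNorm 𝔞 : ZMod q) * (LambdaK K 𝔞 : ℂ) else 0

/-- `ψ'_K(x, χ∘N)`: equals `ψ_K(x, χ∘N) − x` when `χ` is trivial on `G_q`,
and `ψ_K(x, χ∘N)` otherwise. -/
def psiKChi' (K : Type*) [Field K] [NumberField K] (x : ℝ) {q : ℕ}
    (χ : DirichletCharacter ℂ q) : ℂ :=
  if ∀ a ∈ Gq K q, χ (a : ZMod q) = 1 then psiKChi K x χ - x else psiKChi K x χ

/-- The common residue degree `f(K/ℚ; p)` of the primes of `K` above `p`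
(well-defined when `K/ℚ` is Galois): any prime `𝔭` above `p` has `N𝔭 = p^f`. -/
def resDeg (K : Type*) [Field K] [NumberField K] (p : ℕ) : ℕ :=
  if h : ∃ 𝔭 : Ideal (𝓞 K), 𝔭.IsPrime ∧ 𝔭 ≠ ⊥ ∧ (p : 𝓞 K) ∈ 𝔭 then
    (absNorm h.choose).factorization p
  else 0

/-- `D_K(n)`: the number of prime ideal powers `𝔭^m` of `𝓞 K` with `N𝔭^m = n`. -/
def DK (K : Type*) [Field K] [NumberField K] (n : ℕ) : ℕ :=
  Nat.card {𝔞 : Ideal (𝓞 K) // IsPrimeIdealPower 𝔞 ∧ absNorm 𝔞 = n}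

/-- `Λ_K^*(n) = f(K/ℚ; p) · log p` if `n = p^k` is a prime power, and `0` otherwise. -/
def LambdaStarK (K : Type*) [Field K] [NumberField K] (n : ℕ) : ℝ :=
  if IsPrimePow n then (resDeg K n.minFac : ℝ) * Real.log n.minFac else 0

end

/-- The additive character `x ↦ exp (2πix)` of `ℝ`. -/
noncomputable def unitExp (x : ℝ) : ℂ := Complex.exp (Complex.I * ((2 * Real.pi * x : ℝ) : ℂ))

lemma unitExp_add (x y : ℝ) : unitExp (x + y) = unitExp x * unitExp y := by
  rw [unitExp, unitExp, unitExp, ← Complex.exp_add]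
  push_cast
  ring_nf

lemma norm_unitExp (x : ℝ) : ‖unitExp x‖ = 1 := by
  rw [unitExp, mul_comm, Complex.norm_exp_ofReal_mul_I]

lemma conj_unitExp (x : ℝ) : (starRingEnd ℂ) (unitExp x) = unitExp (-x) := by
  rw [unitExp, unitExp, ← Complex.exp_conj, map_mul, Complex.conj_I, Complex.conj_ofReal]
  push_cast
  ring_nf

lemma unitExp_intCast (m : ℤ) : unitExp m = 1 := by
  rw [unitExp, Complex.exp_eq_one_iff]
  exact ⟨m, by push_cast; ring⟩

lemma unitExp_natCast_mul (n : ℕ) (x : ℝ) : unitExp (n * x) = unitExp x ^ n := by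
  rw [unitExp, unitExp, ← Complex.exp_nat_mul]
  push_cast
  ring_nf

lemma unitExp_sub_intCast (x : ℝ) (m : ℤ) : unitExp (x - m) = unitExp x := by
  have h := unitExp_add (x - m) m
  rw [sub_add_cancel, unitExp_intCast, mul_one] at h
  exact h.symm

lemma four_mul_abs_le_norm_unitExp_sub_one {u : ℝ} (hu : |u| ≤ 1 / 2) :
    4 * |u| ≤ ‖unitExp u - 1‖ := by
  rw [unitExp, Complex.norm_exp_I_mul_ofReal_sub_one, norm_mul, Real.norm_eq_abs,
    Real.norm_eq_abs, abs_two, show 2 * Real.pi * u / 2 = Real.pi * u by ring]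
  have hpi := Real.pi_pos
  have h : 2 / Real.pi * (Real.pi * |u|) ≤ Real.sin (Real.pi * |u|) :=
    Real.mul_le_sin (by positivity) (by nlinarith)
  have h2 : 2 / Real.pi * (Real.pi * |u|) = 2 * |u| := by field_simp
  have h3 : Real.sin (Real.pi * |u|) ≤ |Real.sin (Real.pi * u)| := by
    rcases abs_cases u with ⟨h, _⟩ | ⟨h, _⟩ <;> rw [h]
    · exact le_abs_self _
    · rw [mul_neg, Real.sin_neg]; exact neg_le_abs _
  linarith

/-- The squared modulus of the Dirichlet kernel `∑_{n < M} exp (2πinx)`. -/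
noncomputable def kernelSq (M : ℕ) (x : ℝ) : ℝ :=
  ‖∑ n ∈ Finset.range M, unitExp (n * x)‖ ^ 2

lemma kernelSq_nonneg (M : ℕ) (x : ℝ) : 0 ≤ kernelSq M x := by unfold kernelSq; positivity

lemma kernelSq_neg (M : ℕ) (x : ℝ) : kernelSq M (-x) = kernelSq M x := by
  unfold kernelSq
  rw [← Complex.norm_conj (∑ n ∈ Finset.range M, unitExp (n * x)), map_sum]
  simp_rw [conj_unitExp, mul_neg]

lemma kernelSq_sub_intCast (M : ℕ) (x : ℝ) (m : ℤ) : kernelSq M (x - m) = kernelSq M x := by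
  simp_rw [kernelSq, unitExp_natCast_mul, unitExp_sub_intCast]

lemma kernelSq_le_sq (M : ℕ) (x : ℝ) : kernelSq M x ≤ (M : ℝ) ^ 2 := by
  unfold kernelSq
  gcongr
  refine (norm_sum_le _ _).trans ?_
  simp [norm_unitExp]

lemma four_mul_sq_mul_kernelSq_le (M : ℕ) {u : ℝ} (hu : |u| ≤ 1 / 2) :
    4 * u ^ 2 * kernelSq M u ≤ 1 := by
  have h1 := four_mul_abs_le_norm_unitExp_sub_one hu
  have h2 : ‖∑ n ∈ Finset.range M, unitExp (n * u)‖ * ‖unitExp u - 1‖ ≤ 2 := by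
    simp_rw [unitExp_natCast_mul]
    rw [← norm_mul, geom_sum_mul]
    refine (norm_sub_le _ _).trans ?_
    rw [norm_pow, norm_unitExp]
    norm_num
  unfold kernelSq
  set S := ‖∑ n ∈ Finset.range M, unitExp (n * u)‖
  have hS : 0 ≤ S := norm_nonneg _
  have h3 : S * (4 * |u|) ≤ 2 := (mul_le_mul_of_nonneg_left h1 hS).trans h2
  have h4 : 0 ≤ S * (4 * |u|) := by positivity
  have h5 : (S * (4 * |u|)) ^ 2 ≤ 2 ^ 2 := by gcongr
  have h6 : |u| ^ 2 = u ^ 2 := sq_abs u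
  nlinarith

lemma kernelSq_le_of_floor {M : ℕ} {δ u : ℝ} (hδ : 0 < δ) (hM : 1 ≤ M * δ) (hu : |u| ≤ 1 / 2) :
    kernelSq M u ≤ 6 * (M : ℝ) ^ 2 * (1 / (1 + (⌊u / δ⌋ : ℝ) ^ 2)) := by
  have h1 := kernelSq_le_sq M u
  have h2 := four_mul_sq_mul_kernelSq_le M hu
  have h0 := kernelSq_nonneg M u
  set F := kernelSq M u
  set k : ℝ := (⌊u / δ⌋ : ℝ)
  set t := u / δ with ht
  have hk1 : k ≤ t := Int.floor_le t
  have hk2 : t < k + 1 := Int.lt_floor_add_one t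
  have hut : u = t * δ := by rw [ht]; field_simp
  have hk : k ^ 2 ≤ 2 * t ^ 2 + 2 := by
    nlinarith [sq_nonneg (k - 2 * t), mul_nonneg (sub_nonneg.2 hk1) (sub_nonneg.2 hk2.le)]
  have h3 : 4 * t ^ 2 * F ≤ (M : ℝ) ^ 2 := by
    have : 4 * t ^ 2 * F ≤ 4 * t ^ 2 * F * ((M : ℝ) * δ) ^ 2 := by
      refine le_mul_of_one_le_right (by positivity) (one_le_pow₀ hM)
    calc _ ≤ _ := this
      _ = (4 * u ^ 2 * F) * (M : ℝ) ^ 2 := by rw [hut]; ring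
      _ ≤ 1 * (M : ℝ) ^ 2 := by gcongr
      _ = _ := one_mul _
  rw [mul_one_div, le_div_iff₀ (by positivity)]
  nlinarith [mul_le_mul_of_nonneg_left hk h0]

lemma summable_one_div_one_add_int_sq : Summable fun k : ℤ ↦ 1 / (1 + (k : ℝ) ^ 2) := by
  refine Summable.of_norm_bounded_eventually
    (Real.summable_one_div_int_pow.2 (one_lt_two : 1 < 2)) ?_
  rw [Filter.eventually_cofinite]
  refine (Set.finite_singleton (0 : ℤ)).subset fun k hk ↦ ?_
  by_contra hne
  refine hk ?_
  have : (k : ℝ) ≠ 0 := by exact_mod_cast hne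
  rw [Real.norm_of_nonneg (by positivity)]
  gcongr
  linarith

/-- The real numbers `α i`, `i ∈ s`, are `δ`-spaced modulo one. -/
def SpacedModOne {ι : Type*} (s : Finset ι) (α : ι → ℝ) (δ : ℝ) : Prop :=
  ∀ i ∈ s, ∀ j ∈ s, i ≠ j → ∀ m : ℤ, δ ≤ |α i - α j - m|

/-- The absolute constant of the large sieve inequality. -/
noncomputable def sieveConst : ℝ := 6 * ∑' k : ℤ, 1 / (1 + (k : ℝ) ^ 2)

lemma sieveConst_pos : 0 < sieveConst := by
  have := summable_one_div_one_add_int_sq.tsum_pos (fun k ↦ by positivity) 0 (by norm_num)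
  unfold sieveConst
  positivity

lemma sum_kernelSq_le {ι : Type*} {s : Finset ι} {α : ι → ℝ} {δ : ℝ} (hδ : 0 < δ)
    (hα : SpacedModOne s α δ) {M : ℕ} (hM : 1 ≤ M * δ) (y : ℝ) :
    ∑ j ∈ s, kernelSq M (y - α j) ≤ sieveConst * (M : ℝ) ^ 2 := by
  set u : ι → ℝ := fun j ↦ y - α j - round (y - α j) with hu
  have hinj : Set.InjOn (fun j ↦ ⌊u j / δ⌋) s := by
    intro i hi j hj hij
    by_contra hne
    have h1 := Int.abs_sub_lt_one_of_floor_eq_floor hij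
    rw [← sub_div, abs_div, abs_of_pos hδ, div_lt_one hδ] at h1
    have h2 := hα i hi j hj hne (round (y - α j) - round (y - α i))
    rw [abs_sub_comm] at h1
    have h3 : u j - u i = α i - α j - ((round (y - α j) - round (y - α i) : ℤ) : ℝ) := by
      simp only [hu]; push_cast; ring
    rw [h3] at h1
    linarith
  calc ∑ j ∈ s, kernelSq M (y - α j)
      ≤ ∑ j ∈ s, 6 * (M : ℝ) ^ 2 * (1 / (1 + (⌊u j / δ⌋ : ℝ) ^ 2)) := by
        refine Finset.sum_le_sum fun j _ ↦ ?_
        rw [← kernelSq_sub_intCast M (y - α j) (round (y - α j))]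
        exact kernelSq_le_of_floor hδ hM (abs_sub_round _)
    _ = 6 * (M : ℝ) ^ 2 * ∑ k ∈ s.image fun j ↦ ⌊u j / δ⌋, 1 / (1 + (k : ℝ) ^ 2) := by
        rw [Finset.sum_image hinj, Finset.mul_sum]
    _ ≤ 6 * (M : ℝ) ^ 2 * ∑' k : ℤ, 1 / (1 + (k : ℝ) ^ 2) := by
        gcongr
        exact summable_one_div_one_add_int_sq.sum_le_tsum _ fun k _ ↦ by positivity
    _ = _ := by unfold sieveConst; ring

lemma sum_sum_norm_sq_expSum_sub {ι : Type*} (s : Finset ι) (α : ι → ℝ) (c : ι → ℂ) (M : ℕ) :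
    ((∑ a ∈ Finset.range M, ∑ b ∈ Finset.range M,
      ‖∑ i ∈ s, c i * unitExp (((a : ℝ) - b) * α i)‖ ^ 2 : ℝ) : ℂ) =
    ∑ i ∈ s, ∑ j ∈ s, c i * (starRingEnd ℂ) (c j) * (kernelSq M (α i - α j) : ℂ) := by
  have hker (x : ℝ) : (kernelSq M x : ℂ) =
      ∑ a ∈ Finset.range M, ∑ b ∈ Finset.range M, unitExp (((a : ℝ) - b) * x) := by
    rw [kernelSq, Complex.ofReal_pow, ← Complex.mul_conj', map_sum, Finset.sum_mul_sum]
    refine Finset.sum_congr rfl fun a _ ↦ Finset.sum_congr rfl fun b _ ↦ ?_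
    rw [conj_unitExp, ← unitExp_add]
    ring_nf
  have hsq (a b : ℕ) : ((‖∑ i ∈ s, c i * unitExp (((a : ℝ) - b) * α i)‖ ^ 2 : ℝ) : ℂ) =
      ∑ i ∈ s, ∑ j ∈ s, c i * (starRingEnd ℂ) (c j) *
        unitExp (((a : ℝ) - b) * (α i - α j)) := by
    rw [Complex.ofReal_pow, ← Complex.mul_conj', map_sum, Finset.sum_mul_sum]
    refine Finset.sum_congr rfl fun i _ ↦ Finset.sum_congr rfl fun j _ ↦ ?_
    rw [map_mul, conj_unitExp, mul_sub, sub_eq_add_neg (_ * α i), unitExp_add]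
    ring
  push_cast only [Complex.ofReal_sum]
  simp_rw [hsq, hker, Finset.mul_sum]
  rw [Finset.sum_congr rfl fun a _ ↦ Finset.sum_comm, Finset.sum_comm]
  refine Finset.sum_congr rfl fun i _ ↦ ?_
  rw [Finset.sum_congr rfl fun a _ ↦ Finset.sum_comm, Finset.sum_comm]

lemma sum_sum_norm_sq_expSum_sub_le {ι : Type*} {s : Finset ι} {α : ι → ℝ} {δ : ℝ} (hδ : 0 < δ)
    (hα : SpacedModOne s α δ) (c : ι → ℂ) {M : ℕ} (hM : 1 ≤ M * δ) :
    ∑ a ∈ Finset.range M, ∑ b ∈ Finset.range M,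
      ‖∑ i ∈ s, c i * unitExp (((a : ℝ) - b) * α i)‖ ^ 2 ≤
    sieveConst * (M : ℝ) ^ 2 * ∑ i ∈ s, ‖c i‖ ^ 2 := by
  set T := ∑ a ∈ Finset.range M, ∑ b ∈ Finset.range M,
      ‖∑ i ∈ s, c i * unitExp (((a : ℝ) - b) * α i)‖ ^ 2 with hT
  have hT0 : 0 ≤ T := by positivity
  have h1 : T = ‖(T : ℂ)‖ := by rw [Complex.norm_real, Real.norm_of_nonneg hT0]
  have hrow : ∑ i ∈ s, ∑ j ∈ s, ‖c i‖ ^ 2 * kernelSq M (α i - α j) ≤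
      sieveConst * (M : ℝ) ^ 2 * ∑ i ∈ s, ‖c i‖ ^ 2 := by
    rw [Finset.mul_sum]
    refine Finset.sum_le_sum fun i _ ↦ ?_
    rw [← Finset.mul_sum, mul_comm]
    gcongr
    exact sum_kernelSq_le hδ hα hM (α i)
  have hcol : ∑ i ∈ s, ∑ j ∈ s, ‖c j‖ ^ 2 * kernelSq M (α i - α j) =
      ∑ i ∈ s, ∑ j ∈ s, ‖c i‖ ^ 2 * kernelSq M (α i - α j) := by
    rw [Finset.sum_comm]
    refine Finset.sum_congr rfl fun i _ ↦ Finset.sum_congr rfl fun j _ ↦ ?_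
    rw [← kernelSq_neg, neg_sub]
  have hmain : T ≤ ∑ i ∈ s, ∑ j ∈ s, (‖c i‖ ^ 2 * kernelSq M (α i - α j) / 2 +
      ‖c j‖ ^ 2 * kernelSq M (α i - α j) / 2) := by
    rw [h1, hT, sum_sum_norm_sq_expSum_sub]
    refine (norm_sum_le _ _).trans (Finset.sum_le_sum fun i _ ↦ ?_)
    refine (norm_sum_le _ _).trans (Finset.sum_le_sum fun j _ ↦ ?_)
    have hF := kernelSq_nonneg M (α i - α j)
    rw [norm_mul, norm_mul, Complex.norm_conj, Complex.norm_real, Real.norm_of_nonneg hF]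
    nlinarith [mul_nonneg (sq_nonneg (‖c i‖ - ‖c j‖)) hF]
  simp_rw [Finset.sum_add_distrib, ← Finset.sum_div] at hmain
  linarith

/-- The dual large sieve inequality. -/
lemma dual_large_sieve {ι : Type*} {s : Finset ι} {α : ι → ℝ} {δ : ℝ} (hδ : 0 < δ)
    (hα : SpacedModOne s α δ) (c : ι → ℂ) (N : ℕ) :
    ∑ n ∈ Finset.range (N + 1), ‖∑ i ∈ s, c i * unitExp (n * α i)‖ ^ 2 ≤
    4 * sieveConst * (N + 1 + δ⁻¹) * ∑ i ∈ s, ‖c i‖ ^ 2 := by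
  set R := ⌈δ⁻¹⌉₊ with hR
  have hRpos : 0 < R := Nat.ceil_pos.2 (by positivity)
  have hR1 : δ⁻¹ ≤ R := Nat.le_ceil _
  have hR2 : (R : ℝ) < δ⁻¹ + 1 := Nat.ceil_lt_add_one (by positivity)
  have hM : 1 ≤ ((2 * N + R : ℕ) : ℝ) * δ := by
    have : δ⁻¹ ≤ ((2 * N + R : ℕ) : ℝ) := by push_cast; linarith [N.cast_nonneg (α := ℝ)]
    calc (1 : ℝ) = δ⁻¹ * δ := by field_simp
      _ ≤ _ := by gcongr
  have hkey := sum_sum_norm_sq_expSum_sub_le hδ hα c hM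
  set D : ℝ → ℝ := fun y ↦ ‖∑ i ∈ s, c i * unitExp (y * α i)‖ ^ 2 with hD
  have hD0 (y : ℝ) : 0 ≤ D y := by positivity
  have hlow : ((N + R : ℕ) : ℝ) * ∑ n ∈ Finset.range (N + 1), D n ≤
      ∑ a ∈ Finset.range (2 * N + R), ∑ b ∈ Finset.range (2 * N + R), D ((a : ℝ) - b) := by
    rw [Finset.sum_comm]
    calc _ = ∑ b ∈ Finset.range (N + R), ∑ n ∈ Finset.range (N + 1), D n := by simp
      _ ≤ ∑ b ∈ Finset.range (N + R), ∑ a ∈ Finset.range (2 * N + R), D ((a : ℝ) - b) := by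
        refine Finset.sum_le_sum fun b hb ↦ ?_
        have hb' := Finset.mem_range.1 hb
        calc ∑ n ∈ Finset.range (N + 1), D n
            = ∑ n ∈ Finset.range (N + 1), D (((n + b : ℕ) : ℝ) - b) := by
              refine Finset.sum_congr rfl fun n _ ↦ ?_
              push_cast; ring_nf
          _ = ∑ a ∈ (Finset.range (N + 1)).image (· + b), D ((a : ℝ) - b) := by
              rw [Finset.sum_image fun x _ y _ h ↦ by simpa using h]
          _ ≤ _ := by
              refine Finset.sum_le_sum_of_subset_of_nonneg ?_ fun _ _ _ ↦ hD0 _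
              intro a ha
              simp only [Finset.mem_image, Finset.mem_range] at ha ⊢
              omega
      _ ≤ _ := Finset.sum_le_sum_of_subset_of_nonneg
          (Finset.range_subset_range.2 (by omega)) fun _ _ _ ↦ Finset.sum_nonneg fun _ _ ↦ hD0 _
  have hpos : (0 : ℝ) < ((N + R : ℕ) : ℝ) := by positivity
  have hC := sieveConst_pos
  have hA : 0 ≤ ∑ i ∈ s, ‖c i‖ ^ 2 := by positivity
  refine le_of_mul_le_mul_left ((hlow.trans hkey).trans ?_) hpos
  have hb1 : ((2 * N + R : ℕ) : ℝ) ≤ 2 * ((N + R : ℕ) : ℝ) := by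
    push_cast; linarith [R.cast_nonneg (α := ℝ)]
  have hb2 : ((2 * N + R : ℕ) : ℝ) ≤ 2 * (N + 1 + δ⁻¹) := by
    push_cast; have := inv_pos.2 hδ; linarith
  calc sieveConst * ((2 * N + R : ℕ) : ℝ) ^ 2 * ∑ i ∈ s, ‖c i‖ ^ 2
      = sieveConst * (((2 * N + R : ℕ) : ℝ) * ((2 * N + R : ℕ) : ℝ)) * ∑ i ∈ s, ‖c i‖ ^ 2 := by
        ring
    _ ≤ sieveConst * ((2 * ((N + R : ℕ) : ℝ)) * (2 * (N + 1 + δ⁻¹))) * ∑ i ∈ s, ‖c i‖ ^ 2 := by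
        gcongr
    _ = _ := by ring

/-- The large sieve inequality for exponential sums over well-spaced points. -/
lemma analytic_large_sieve {ι : Type*} {s : Finset ι} {α : ι → ℝ} {δ : ℝ} (hδ : 0 < δ)
    (hα : SpacedModOne s α δ) (a : ℕ → ℂ) (N : ℕ) :
    ∑ i ∈ s, ‖∑ n ∈ Finset.range (N + 1), a n * unitExp (n * α i)‖ ^ 2 ≤
    4 * sieveConst * (N + 1 + δ⁻¹) * ∑ n ∈ Finset.range (N + 1), ‖a n‖ ^ 2 := by
  set S : ι → ℂ := fun i ↦ ∑ n ∈ Finset.range (N + 1), a n * unitExp (n * α i) with hS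
  set c : ι → ℂ := fun i ↦ (starRingEnd ℂ) (S i) with hc
  set T := ∑ i ∈ s, ‖S i‖ ^ 2 with hT
  have hdual := dual_large_sieve hδ hα c N
  have hcT : ∑ i ∈ s, ‖c i‖ ^ 2 = T := by simp [hc, hT]
  rw [hcT] at hdual
  have hTc : (T : ℂ) =
      ∑ n ∈ Finset.range (N + 1), a n * ∑ i ∈ s, c i * unitExp (n * α i) := by
    rw [hT, Complex.ofReal_sum]
    simp_rw [Complex.ofReal_pow, ← Complex.mul_conj', Finset.mul_sum]
    rw [Finset.sum_comm]
    refine Finset.sum_congr rfl fun i _ ↦ ?_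
    conv_lhs => enter [1]; rw [hS]
    rw [Finset.sum_mul]
    refine Finset.sum_congr rfl fun n _ ↦ ?_
    simp only [hc]; ring
  have hT0 : 0 ≤ T := by positivity
  have hle : T ≤ ∑ n ∈ Finset.range (N + 1), ‖a n‖ * ‖∑ i ∈ s, c i * unitExp (n * α i)‖ := by
    calc T = ‖(T : ℂ)‖ := by rw [Complex.norm_real, Real.norm_of_nonneg hT0]
      _ ≤ _ := by
        rw [hTc]
        refine (norm_sum_le _ _).trans_eq ?_
        simp_rw [norm_mul]
  have hcs := Finset.sum_mul_sq_le_sq_mul_sq (Finset.range (N + 1)) (fun n ↦ ‖a n‖)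
    fun n ↦ ‖∑ i ∈ s, c i * unitExp (n * α i)‖
  have hA : 0 ≤ ∑ n ∈ Finset.range (N + 1), ‖a n‖ ^ 2 := by positivity
  have hsq : T * T ≤
      4 * sieveConst * (N + 1 + δ⁻¹) * (∑ n ∈ Finset.range (N + 1), ‖a n‖ ^ 2) * T := by
    calc T * T = T ^ 2 := by ring
      _ ≤ _ := (pow_le_pow_left₀ hT0 hle 2).trans hcs
      _ ≤ _ := mul_le_mul_of_nonneg_left hdual hA
      _ = _ := by ring
  rcases hT0.eq_or_lt with h | h
  · rw [← h]
    have := sieveConst_pos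
    positivity
  · exact le_of_mul_le_mul_right hsq h

lemma sum_coprime_range_eq_sum_units {q : ℕ} [NeZero q] (f : ZMod q → ℝ) :
    ∑ b ∈ Finset.range q with b.Coprime q, f (b : ZMod q) = ∑ u : (ZMod q)ˣ, f u := by
  symm
  refine Finset.sum_bij (fun u _ ↦ (u : ZMod q).val) (fun u _ ↦ ?_) (fun u _ v _ h ↦ ?_)
    (fun b hb ↦ ?_) (fun u _ ↦ ?_)
  · exact Finset.mem_filter.2 ⟨Finset.mem_range.2 (ZMod.val_lt _), ZMod.val_coe_unit_coprime u⟩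
  · exact Units.ext (ZMod.val_injective q h)
  · obtain ⟨hb1, hb2⟩ := Finset.mem_filter.1 hb
    refine ⟨ZMod.unitOfCoprime b hb2, Finset.mem_univ _, ?_⟩
    rw [ZMod.coe_unitOfCoprime, ZMod.val_cast_of_lt (Finset.mem_range.1 hb1)]
  · rw [ZMod.natCast_zmod_val]

lemma sum_norm_sq_sum_char_mul {q : ℕ} [NeZero q] (f : (ZMod q)ˣ → ℂ) :
    ∑ χ : DirichletCharacter ℂ q, ‖∑ u : (ZMod q)ˣ, χ u * f u‖ ^ 2 =
      q.totient * ∑ u : (ZMod q)ˣ, ‖f u‖ ^ 2 := by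
  have hconj (χ : DirichletCharacter ℂ q) (u : (ZMod q)ˣ) :
      (starRingEnd ℂ) (χ u) = χ (u : ZMod q)⁻¹ := by
    rw [starRingEnd_apply, MulChar.star_apply', MulChar.inv_apply, Ring.inverse_unit,
      ZMod.inv_coe_unit]
  rw [← Complex.ofReal_inj]
  push_cast
  simp_rw [← Complex.mul_conj', map_sum, map_mul, Finset.sum_mul_sum]
  rw [Finset.sum_comm, Finset.mul_sum]
  refine Finset.sum_congr rfl fun u _ ↦ ?_
  rw [Finset.sum_comm]
  have (v : (ZMod q)ˣ) : ∑ χ : DirichletCharacter ℂ q,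
      χ u * f u * ((starRingEnd ℂ) (χ v) * (starRingEnd ℂ) (f v)) =
      if v = u then (q.totient : ℂ) * (f u * (starRingEnd ℂ) (f u)) else 0 := by
    have h := DirichletCharacter.sum_char_inv_mul_char_eq ℂ v.isUnit (u : ZMod q)
    simp_rw [hconj]
    calc _ = (∑ χ : DirichletCharacter ℂ q, χ (v : ZMod q)⁻¹ * χ u) *
          (f u * (starRingEnd ℂ) (f v)) := by
          rw [Finset.sum_mul]; exact Finset.sum_congr rfl fun χ _ ↦ by ring
      _ = _ := by
          rw [h]
          by_cases hvu : v = u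
          · simp [hvu]
          · simp [hvu, Units.val_inj]
  simp_rw [this]
  simp

lemma norm_sq_gaussSum_of_isPrimitive {q : ℕ} [NeZero q] {χ : DirichletCharacter ℂ q}
    (hχ : χ.IsPrimitive) : ‖gaussSum χ ZMod.stdAddChar‖ ^ 2 = q := by
  rw [← Complex.ofReal_inj]
  push_cast
  rw [← Complex.mul_conj', starRingEnd_apply, star_gaussSum_eq]
  calc gaussSum χ ZMod.stdAddChar * gaussSum χ⁻¹ ZMod.stdAddChar⁻¹
      = ∑ n : ZMod q, gaussSum χ (ZMod.stdAddChar.mulShift n) * ZMod.stdAddChar (-n) := by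
        conv_lhs => rw [gaussSum.eq_1 χ⁻¹, Finset.mul_sum]
        refine Finset.sum_congr rfl fun n _ ↦ ?_
        rw [gaussSum_mulShift_of_isPrimitive _ hχ, AddChar.inv_apply]
        ring
    _ = ∑ b : ZMod q, χ b * ∑ n : ZMod q, ZMod.stdAddChar (n * (b - 1)) := by
        simp_rw [gaussSum, Finset.sum_mul, Finset.mul_sum]
        rw [Finset.sum_comm]
        refine Finset.sum_congr rfl fun b _ ↦ Finset.sum_congr rfl fun n _ ↦ ?_
        rw [AddChar.mulShift_apply, mul_assoc, ← AddChar.map_add_eq_mul]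
        ring_nf
    _ = q := by
        simp_rw [AddChar.sum_mulShift _ (ZMod.isPrimitive_stdAddChar q), sub_eq_zero]
        simp [ZMod.card]

lemma natCast_mul_norm_sq_charSum {q : ℕ} [NeZero q] {χ : DirichletCharacter ℂ q}
    (hχ : χ.IsPrimitive) (s : Finset ℕ) (a : ℕ → ℂ) :
    q * ‖∑ n ∈ s, a n * χ n‖ ^ 2 = ‖∑ u : (ZMod q)ˣ, χ u *
      ∑ n ∈ s, (starRingEnd ℂ) (a n) * ZMod.stdAddChar ((n : ZMod q) * (u : ZMod q))‖ ^ 2 := by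
  rw [← norm_sq_gaussSum_of_isPrimitive hχ, ← mul_pow, ← Complex.norm_conj (∑ n ∈ s, _),
    ← norm_mul]
  congr 2
  have hunits (f : ZMod q → ℂ) : ∑ u : (ZMod q)ˣ, χ u * f u = ∑ b : ZMod q, χ b * f b := by
    refine Finset.sum_of_injOn (fun u : (ZMod q)ˣ ↦ (u : ZMod q)) Units.val_injective.injOn
      (by simp) (fun b _ hb ↦ ?_) fun _ _ ↦ rfl
    rw [χ.map_nonunit, zero_mul]
    rintro ⟨u, rfl⟩
    exact hb ⟨u, by simp, rfl⟩
  rw [hunits fun b ↦ ∑ n ∈ s, (starRingEnd ℂ) (a n) * ZMod.stdAddChar ((n : ZMod q) * b)]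
  simp_rw [map_sum, Finset.mul_sum]
  rw [Finset.sum_comm]
  refine Finset.sum_congr rfl fun n _ ↦ ?_
  rw [map_mul, starRingEnd_apply (χ _), MulChar.star_apply', mul_left_comm,
    mul_comm (gaussSum _ _), ← gaussSum_mulShift_of_isPrimitive _ hχ, gaussSum, Finset.mul_sum]
  refine Finset.sum_congr rfl fun b _ ↦ ?_
  rw [AddChar.mulShift_apply]
  ring

lemma stdAddChar_natCast_mul_natCast {q : ℕ} [NeZero q] (n b : ℕ) :
    ZMod.stdAddChar ((n : ZMod q) * (b : ZMod q)) = unitExp (n * (b / q : ℝ)) := by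
  have := ZMod.stdAddChar_coe (N := q) (n * b : ℤ)
  push_cast at this
  rw [this, unitExp]
  push_cast
  ring_nf

lemma sum_primitive_norm_sq_charSum_le {q : ℕ} (hq : 1 ≤ q) (s : Finset ℕ) (a : ℕ → ℂ) :
    (q / q.totient : ℝ) * ∑ᶠ χ ∈ {χ : DirichletCharacter ℂ q | χ.IsPrimitive},
      ‖∑ n ∈ s, a n * χ n‖ ^ 2 ≤
    ∑ b ∈ Finset.range q with b.Coprime q,
      ‖∑ n ∈ s, (starRingEnd ℂ) (a n) * unitExp (n * (b / q : ℝ))‖ ^ 2 := by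
  have : NeZero q := ⟨by omega⟩
  have hφ : (0 : ℝ) < q.totient := by exact_mod_cast Nat.totient_pos.2 hq
  set S : ZMod q → ℂ := fun b ↦
    ∑ n ∈ s, (starRingEnd ℂ) (a n) * ZMod.stdAddChar ((n : ZMod q) * b) with hS
  simp_rw [← stdAddChar_natCast_mul_natCast]
  rw [sum_coprime_range_eq_sum_units (fun b ↦ ‖S b‖ ^ 2), div_mul_eq_mul_div, div_le_iff₀ hφ,
    mul_comm (∑ u : (ZMod q)ˣ, _), ← sum_norm_sq_sum_char_mul (fun u : (ZMod q)ˣ ↦ S u),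
    finsum_mem_eq_finite_toFinset_sum _ (Set.toFinite _), Finset.mul_sum]
  calc _ = ∑ χ ∈ (Set.toFinite {χ : DirichletCharacter ℂ q | χ.IsPrimitive}).toFinset,
        ‖∑ u : (ZMod q)ˣ, χ u * S u‖ ^ 2 := by
        refine Finset.sum_congr rfl fun χ hχ ↦ ?_
        exact natCast_mul_norm_sq_charSum (by simpa using hχ) s a
    _ ≤ _ := Finset.sum_le_sum_of_subset_of_nonneg (Finset.subset_univ _)
        fun _ _ _ ↦ by positivity

/-- The reduced fractions `b / q` with `0 ≤ b < q ≤ R`, indexed by the pairs `(q, b)`. -/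
noncomputable def fareyIndex (R : ℕ) : Finset (Σ _ : ℕ, ℕ) :=
  (Finset.Icc 1 R).sigma fun q ↦ (Finset.range q).filter fun b ↦ b.Coprime q

lemma spacedModOne_fareyIndex {R : ℕ} (hR : 1 ≤ R) :
    SpacedModOne (fareyIndex R) (fun i ↦ (i.2 / i.1 : ℝ)) (((R : ℝ) ^ 2)⁻¹) := by
  rintro ⟨q, b⟩ hi ⟨r, c⟩ hj hij m
  simp only [fareyIndex, Finset.mem_sigma, Finset.mem_Icc, Finset.mem_filter,
    Finset.mem_range] at hi hj ⊢
  obtain ⟨⟨hq1, hqR⟩, hbq, hbc⟩ := hi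
  obtain ⟨⟨hr1, hrR⟩, hcr, hcc⟩ := hj
  have hq0 : (0 : ℝ) < q := by exact_mod_cast hq1
  have hr0 : (0 : ℝ) < r := by exact_mod_cast hr1
  set t : ℤ := b * r - c * q - m * (q * r) with ht
  have hval : (b / q : ℝ) - c / r - m = t / (q * r) := by
    rw [ht]; push_cast; field_simp
  have ht0 : t ≠ 0 := by
    intro h0
    refine hij ?_
    have hqr : (q : ℤ) ∣ b * r := ⟨c + m * r, by linarith⟩
    have hrq : (r : ℤ) ∣ c * q := ⟨b - m * q, by linarith⟩
    have h1 : q ∣ r := hbc.symm.dvd_of_dvd_mul_left (by exact_mod_cast hqr)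
    have h2 : r ∣ q := hcc.symm.dvd_of_dvd_mul_left (by exact_mod_cast hrq)
    obtain rfl := Nat.dvd_antisymm h1 h2
    have hq' : (q : ℤ) ≠ 0 := by omega
    have h3 : (b : ℤ) - c = m * q := by
      refine mul_right_cancel₀ hq' ?_
      linarith
    have hm : m = 0 := by
      have h4 : |m * (q : ℤ)| < q := by rw [← h3, abs_lt]; constructor <;> omega
      rw [abs_mul, Nat.abs_cast] at h4
      have h5 : |m| < 1 := by
        by_contra! h
        nlinarith
      exact Int.abs_lt_one_iff.1 h5
    rw [hm] at h3
    have : b = c := by omega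
    rw [this]
  rw [hval, abs_div, abs_of_pos (mul_pos hq0 hr0)]
  have h1 : (1 : ℝ) ≤ |(t : ℝ)| := by exact_mod_cast Int.one_le_abs ht0
  have h2 : (q * r : ℝ) ≤ (R : ℝ) ^ 2 := by
    rw [sq]; gcongr
  calc ((R : ℝ) ^ 2)⁻¹ ≤ (q * r : ℝ)⁻¹ := by gcongr
    _ = 1 / (q * r) := (one_div _).symm
    _ ≤ _ := by gcongr

/-- The multiplicative large sieve inequality. -/
lemma multiplicative_large_sieve {R : ℕ} (hR : 1 ≤ R) (a : ℕ → ℂ) (N : ℕ) :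
    ∑ q ∈ Finset.Icc 1 R, (q / q.totient : ℝ) *
      ∑ᶠ χ ∈ {χ : DirichletCharacter ℂ q | χ.IsPrimitive},
        ‖∑ n ∈ Finset.range (N + 1), a n * χ n‖ ^ 2 ≤
    4 * sieveConst * (N + 1 + (R : ℝ) ^ 2) * ∑ n ∈ Finset.range (N + 1), ‖a n‖ ^ 2 := by
  have hδ : (0 : ℝ) < ((R : ℝ) ^ 2)⁻¹ := by positivity
  have h := analytic_large_sieve hδ (spacedModOne_fareyIndex hR)
    (fun n ↦ (starRingEnd ℂ) (a n)) N
  simp only [Complex.norm_conj, inv_inv] at h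
  refine le_trans ?_ h
  rw [fareyIndex, Finset.sum_sigma]
  exact Finset.sum_le_sum fun q hq ↦
    sum_primitive_norm_sq_charSum_le (Finset.mem_Icc.1 hq).1 _ a

/-- The sum of `Λ_K` over the ideals of norm `n`. -/
noncomputable def normCoeff (K : Type*) [Field K] [NumberField K] (n : ℕ) : ℝ :=
  ∑ 𝔞 ∈ (finite_setOfPred_absNorm_eq (S := 𝓞 K) n).toFinset, LambdaK K 𝔞

lemma psiKChi_eq_sum_normCoeff (K : Type*) [Field K] [NumberField K] {x : ℝ} (hx : 0 ≤ x) {q : ℕ}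
    (χ : DirichletCharacter ℂ q) :
    psiKChi K x χ = ∑ n ∈ Finset.range (⌊x⌋₊ + 1), (normCoeff K n : ℂ) * χ n := by
  have hmem (𝔞 : Ideal (𝓞 K)) : (absNorm 𝔞 : ℝ) ≤ x ↔ absNorm 𝔞 ≤ ⌊x⌋₊ :=
    (Nat.le_floor_iff hx).symm
  rw [psiKChi, tsum_eq_sum (s := (finite_setOfPred_absNorm_le (S := 𝓞 K) ⌊x⌋₊).toFinset)]
  · rw [← Finset.sum_fiberwise_of_maps_to (g := fun 𝔞 ↦ absNorm 𝔞)
      (t := Finset.range (⌊x⌋₊ + 1)) fun 𝔞 h𝔞 ↦ by simpa [Nat.lt_succ_iff] using h𝔞]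
    refine Finset.sum_congr rfl fun n hn ↦ ?_
    have hn' : n ≤ ⌊x⌋₊ := Nat.lt_succ_iff.1 (Finset.mem_range.1 hn)
    rw [normCoeff, Complex.ofReal_sum, Finset.sum_mul]
    refine Finset.sum_congr ?_ fun 𝔞 h𝔞 ↦ ?_
    · ext 𝔞
      simp only [Finset.mem_filter, Set.Finite.mem_toFinset, Set.mem_ofPred_eq]
      exact ⟨fun h ↦ h.2, fun h ↦ ⟨h.trans_le hn', h⟩⟩
    · have h𝔞' : absNorm 𝔞 = n := by simpa using h𝔞
      rw [if_pos ((hmem 𝔞).2 (h𝔞'.trans_le hn')), h𝔞', mul_comm]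
  · intro 𝔞 h𝔞
    rw [if_neg]
    rw [hmem]
    simpa using h𝔞

lemma normCoeff_nonneg (K : Type*) [Field K] [NumberField K] (n : ℕ) : 0 ≤ normCoeff K n := by
  refine Finset.sum_nonneg fun 𝔞 _ ↦ ?_
  unfold LambdaK
  split_ifs
  · exact Real.log_natCast_nonneg _
  · rfl

lemma radical_injOn_isPrimeIdealPower (K : Type*) [Field K] [NumberField K] (n : ℕ) :
    Set.InjOn (fun 𝔞 : Ideal (𝓞 K) ↦ 𝔞.radical)
      {𝔞 | IsPrimeIdealPower 𝔞 ∧ absNorm 𝔞 = n} := by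
  rintro _ ⟨⟨𝔭, m, h𝔭, h𝔭0, hm, rfl⟩, hn⟩ _ ⟨⟨𝔮, k, h𝔮, h𝔮0, hk, rfl⟩, hn'⟩ h
  simp only [radical_pow _ (Nat.one_le_iff_ne_zero.1 hm),
    radical_pow _ (Nat.one_le_iff_ne_zero.1 hk), h𝔭.radical, h𝔮.radical] at h
  subst h
  rw [← hn', map_pow, map_pow] at hn
  have h0 : absNorm 𝔭 ≠ 0 := by rwa [Ne, absNorm_eq_zero_iff]
  have h1 : absNorm 𝔭 ≠ 1 := by rw [Ne, absNorm_eq_one_iff]; exact h𝔭.ne_top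
  rw [Nat.pow_right_injective (by omega : 2 ≤ absNorm 𝔭) hn]

lemma sum_log_absNorm_le (K : Type*) [Field K] [NumberField K] {p : ℕ} (hp : p.Prime)
    (s : Finset (Ideal (𝓞 K))) (hs : ∀ 𝔭 ∈ s, 𝔭.IsPrime ∧ 𝔭 ≠ ⊥ ∧ (p : 𝓞 K) ∈ 𝔭) :
    ∑ 𝔭 ∈ s, Real.log (absNorm 𝔭) ≤ Module.finrank ℤ (𝓞 K) * Real.log p := by
  have hdvd : ∏ 𝔭 ∈ s, 𝔭 ∣ span {(p : 𝓞 K)} := by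
    refine Finset.prod_primes_dvd _ (fun 𝔭 h ↦ ?_) fun 𝔭 h ↦ ?_
    · exact prime_of_isPrime (hs 𝔭 h).2.1 (hs 𝔭 h).1
    · rw [dvd_span_singleton]
      exact (hs 𝔭 h).2.2
  have hnorm : ∏ 𝔭 ∈ s, absNorm 𝔭 ∣ p ^ Module.finrank ℤ (𝓞 K) := by
    rw [← map_prod, ← absNorm_span_natCast]
    exact map_dvd absNorm hdvd
  have hne (𝔭) (h : 𝔭 ∈ s) : (absNorm 𝔭 : ℝ) ≠ 0 := by
    rw [Nat.cast_ne_zero, Ne, absNorm_eq_zero_iff]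
    exact (hs 𝔭 h).2.1
  rw [← Real.log_prod hne, ← Real.log_pow]
  refine Real.log_le_log (Finset.prod_pos fun 𝔭 h ↦ (Nat.cast_nonneg _).lt_of_ne' (hne 𝔭 h)) ?_
  exact_mod_cast Nat.le_of_dvd (pow_pos hp.pos _) hnorm

lemma normCoeff_le (K : Type*) [Field K] [NumberField K] (n : ℕ) :
    normCoeff K n ≤ Module.finrank ℤ (𝓞 K) * ArithmeticFunction.vonMangoldt n := by
  set s := (finite_setOfPred_absNorm_eq (S := 𝓞 K) n).toFinset.filter IsPrimeIdealPower with hs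
  have hmem {𝔞 : Ideal (𝓞 K)} (h : 𝔞 ∈ s) : IsPrimeIdealPower 𝔞 ∧ absNorm 𝔞 = n := by
    simpa [hs, and_comm] using h
  have hcoeff : normCoeff K n = ∑ 𝔞 ∈ s, Real.log (absNorm 𝔞.radical) := by
    rw [normCoeff, hs, Finset.sum_filter]
    rfl
  rw [hcoeff]
  rcases s.eq_empty_or_nonempty with h | ⟨𝔟, h𝔟⟩
  · rw [h, Finset.sum_empty]
    have := ArithmeticFunction.vonMangoldt_nonneg (n := n)
    positivity
  obtain ⟨p, k, hk, hp, hn⟩ : ∃ p k : ℕ, k ≠ 0 ∧ p.Prime ∧ n = p ^ k := by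
    obtain ⟨⟨𝔮, m, h𝔮, h𝔮0, hm, rfl⟩, hn⟩ := hmem h𝔟
    have := h𝔮.isMaximal h𝔮0
    obtain ⟨p, f, hf, -, hp, hpf⟩ := exists_prime_and_absNorm_eq_pow 𝔮
    exact ⟨p, f * m, mul_ne_zero hf.ne' (by omega), hp, by rw [← hn, map_pow, hpf, pow_mul]⟩
  have hinj : Set.InjOn (fun 𝔞 : Ideal (𝓞 K) ↦ 𝔞.radical) s :=
    (radical_injOn_isPrimeIdealPower K n).mono fun 𝔞 h ↦ hmem h
  rw [← Finset.sum_image (f := fun 𝔭 : Ideal (𝓞 K) ↦ Real.log (absNorm 𝔭)) hinj, hn,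
    ArithmeticFunction.vonMangoldt_apply_pow hk, ArithmeticFunction.vonMangoldt_apply_prime hp]
  refine sum_log_absNorm_le K hp _ fun 𝔭 h𝔭 ↦ ?_
  obtain ⟨𝔞, h𝔞, rfl⟩ := Finset.mem_image.1 h𝔭
  obtain ⟨⟨𝔮, m, h𝔮, h𝔮0, hm, rfl⟩, hN⟩ := hmem h𝔞
  simp only [radical_pow _ (Nat.one_le_iff_ne_zero.1 hm), h𝔮.radical]
  refine ⟨h𝔮, h𝔮0, h𝔮.mem_of_pow_mem k ?_⟩
  have := pow_le_self (by omega : m ≠ 0) (absNorm_mem (𝔮 ^ m))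
  rwa [hN, hn, Nat.cast_pow] at this

lemma sum_vonMangoldt_sq_le {x : ℝ} (hx : 2 ≤ x) :
    ∑ n ∈ Finset.range (⌊x⌋₊ + 1), ArithmeticFunction.vonMangoldt n ^ 2 ≤
      (Real.log 4 + 4) * x * Real.log x := by
  have hlog : 0 ≤ Real.log x := Real.log_nonneg (by linarith)
  calc ∑ n ∈ Finset.range (⌊x⌋₊ + 1), ArithmeticFunction.vonMangoldt n ^ 2
      ≤ ∑ n ∈ Finset.range (⌊x⌋₊ + 1), ArithmeticFunction.vonMangoldt n * Real.log x := by
        refine Finset.sum_le_sum fun n hn ↦ ?_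
        rw [sq]
        refine mul_le_mul_of_nonneg_left ?_ ArithmeticFunction.vonMangoldt_nonneg
        rcases n.eq_zero_or_pos with rfl | hn0
        · simpa using hlog
        refine ArithmeticFunction.vonMangoldt_le_log.trans (Real.log_le_log (by positivity) ?_)
        exact (Nat.le_floor_iff (by linarith)).1 (Nat.lt_succ_iff.1 (Finset.mem_range.1 hn))
    _ = Chebyshev.psi x * Real.log x := by
        rw [← Finset.sum_mul, Chebyshev.psi_eq_sum_Icc, ← Nat.range_succ_eq_Icc_zero]
    _ ≤ _ := by
        gcongr
        exact Chebyshev.psi_le_const_mul_self (by linarith)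

lemma sum_norm_sq_normCoeff_le (K : Type*) [Field K] [NumberField K] {x : ℝ} (hx : 2 ≤ x) :
    ∑ n ∈ Finset.range (⌊x⌋₊ + 1), ‖(normCoeff K n : ℂ)‖ ^ 2 ≤
      (Module.finrank ℤ (𝓞 K) : ℝ) ^ 2 * ((Real.log 4 + 4) * x * Real.log x) := by
  calc _ ≤ ∑ n ∈ Finset.range (⌊x⌋₊ + 1),
        (Module.finrank ℤ (𝓞 K) : ℝ) ^ 2 * ArithmeticFunction.vonMangoldt n ^ 2 := by
        refine Finset.sum_le_sum fun n _ ↦ ?_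
        rw [Complex.norm_real, Real.norm_of_nonneg (normCoeff_nonneg K n), ← mul_pow]
        exact pow_le_pow_left₀ (normCoeff_nonneg K n) (normCoeff_le K n) 2
    _ ≤ _ := by
        rw [← Finset.mul_sum]
        gcongr
        exact sum_vonMangoldt_sq_le hx

/-- **Large sieve bound (Lemma 1).**
`∑_{q ≤ Q} (q/φ(q)) ∑_{χ primitive mod q} |ψ_K(x, χ∘N)|² ≪ (x + Q²) x log x`,
the implied constant depending only on `K`. -/
theorem large_sieve_psiK (K : Type*) [Field K] [NumberField K] [IsGalois ℚ K] :
    ∃ C : ℝ, 0 < C ∧ ∀ x Q : ℝ, 2 ≤ x → 1 ≤ Q →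
      ∑ q ∈ Finset.Icc 1 ⌊Q⌋₊, (q / q.totient : ℝ) *
          ∑ᶠ χ ∈ {χ : DirichletCharacter ℂ q | χ.IsPrimitive}, ‖psiKChi K x χ‖ ^ 2 ≤
        C * ((x + Q ^ 2) * x * Real.log x) := by
  set d : ℝ := (Module.finrank ℤ (𝓞 K) : ℝ) with hd
  have hd0 : 0 < d := by
    rw [hd, Nat.cast_pos]
    exact Module.finrank_pos
  have hC := sieveConst_pos
  have hlog4 : 0 < Real.log 4 := Real.log_pos (by norm_num)
  refine ⟨8 * sieveConst * d ^ 2 * (Real.log 4 + 4), by positivity, fun x Q hx hQ ↦ ?_⟩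
  have hlog : 0 ≤ Real.log x := Real.log_nonneg (by linarith)
  have hx0 : 0 ≤ x := by linarith
  simp_rw [psiKChi_eq_sum_normCoeff K hx0]
  refine (multiplicative_large_sieve (Nat.le_floor (by simpa using hQ))
    (fun n ↦ (normCoeff K n : ℂ)) ⌊x⌋₊).trans ?_
  have hfx : (⌊x⌋₊ : ℝ) ≤ x := Nat.floor_le hx0
  have hfQ : (⌊Q⌋₊ : ℝ) ≤ Q := Nat.floor_le (by linarith)
  have hsize : (⌊x⌋₊ : ℝ) + 1 + (⌊Q⌋₊ : ℝ) ^ 2 ≤ 2 * (x + Q ^ 2) := by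
    have : (⌊Q⌋₊ : ℝ) ^ 2 ≤ Q ^ 2 := by gcongr
    nlinarith
  calc _ ≤ 4 * sieveConst * (2 * (x + Q ^ 2)) *
        (d ^ 2 * ((Real.log 4 + 4) * x * Real.log x)) := by
        gcongr
        exact sum_norm_sq_normCoeff_le K hx
    _ = _ := by ring
end

section
/- For every integer q ≥ 1 and every x > 0, ∑_{a ∈ G_q} (ψ_K(x;q,a) − x/φ_K(q))² = (1/φ(q)) ∑_{χ mod q} |ψ'_K(x, χ∘N)|², where the right-hand sum is over all Dirichlet characters χ modulo q and φ is Euler's totient function. -/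
/-!
Setting: `K` is a number field, Galois over `ℚ`, with ring of integers `𝓞 K`.
We formalize the objects from Smith, "A generalization of the
Barban-Davenport-Halberstam Theorem to number fields".
-/

open NumberField Ideal
open scoped Classical BigOperators

/-- The arithmetic Frobenius at a prime `𝔭` not dividing `n` raises an `n`-th root of unity to
the power `N𝔭`. -/
theorem IsPrimitiveRoot.exists_autToPow_eq_absNorm {K L : Type*} [Field K] [NumberField K]
    [Field L] [NumberField L] [Algebra K L] [IsGalois K L] {n : ℕ} [NeZero n] {ζ : L}
    (hζ : IsPrimitiveRoot ζ n) (𝔭 : Ideal (𝓞 K)) [h𝔭 : 𝔭.IsPrime] (h0 : 𝔭 ≠ ⊥)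
    (hn : (n : 𝓞 K) ∉ 𝔭) :
    ∃ σ : L ≃ₐ[K] L, ((hζ.autToPow K σ : (ZMod n)ˣ) : ZMod n) = absNorm 𝔭 := by
  have : 𝔭.IsMaximal := h𝔭.isMaximal h0
  obtain ⟨Q, hQ, hQ𝔭⟩ := Ideal.exists_maximal_ideal_liesOver_of_isIntegral (S := 𝓞 L) 𝔭
  have hQ0 : Q ≠ ⊥ := Ideal.ne_bot_of_liesOver_of_ne_bot h0 Q
  have : Finite (𝓞 L ⧸ Q) := Ideal.finiteQuotientOfFreeOfNeBot Q hQ0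
  have : IsGaloisGroup (L ≃ₐ[K] L) (𝓞 K) (𝓞 L) :=
    IsGaloisGroup.of_isFractionRing _ (𝓞 K) (𝓞 L) K L
  obtain ⟨σ, hσ⟩ := IsArithFrobAt.exists_of_isInvariant (𝓞 K) (L ≃ₐ[K] L) Q
  refine ⟨σ, ?_⟩
  have hnQ : (n : 𝓞 L) ∉ Q := fun h ↦ hn <| by
    rw [hQ𝔭.over, Ideal.mem_comap, map_natCast]
    exact h
  have hζ' := hζ.toInteger_isPrimitiveRoot
  have key := AlgHom.IsArithFrobAt.apply_of_pow_eq_one hσ hζ'.pow_eq_one hnQ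
  have hσζ : σ ζ = ζ ^ absNorm 𝔭 := by
    have := congrArg (algebraMap (𝓞 L) L) key
    rw [← hQ𝔭.over, map_pow] at this
    exact this
  rw [← hζ.autToPow_spec K σ, (hζ.isOfFinOrder (NeZero.ne n)).pow_eq_pow_iff_modEq,
    ← hζ.eq_orderOf, ← ZMod.natCast_eq_natCast_iff, ZMod.natCast_zmod_val] at hσζ
  exact hσζ

/-- The norm of a prime ideal power, if it is a unit modulo `q`, lies in `G_q`. -/
theorem IsPrimeIdealPower.mem_Gq_of_absNorm_eq {K : Type*} [Field K] [NumberField K] {q : ℕ}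
    (hq : 1 ≤ q) {𝔞 : Ideal (𝓞 K)} (h𝔞 : IsPrimeIdealPower 𝔞) {u : (ZMod q)ˣ}
    (hu : (absNorm 𝔞 : ZMod q) = u) : u ∈ Gq K q := by
  obtain ⟨𝔭, m, h𝔭, h0, hm, rfl⟩ := h𝔞
  have hunit : IsUnit (absNorm 𝔭 : ZMod q) := by
    rw [← isUnit_pow_iff (Nat.one_le_iff_ne_zero.mp hm), ← Nat.cast_pow, ← map_pow, hu]
    exact u.isUnit
  have hn : (q : 𝓞 K) ∉ 𝔭 := fun h ↦ by
    have hcop := (Nat.isCoprime_iff_coprime.mpr ((ZMod.isUnit_iff_coprime _ _).mp hunit)).map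
      (Int.castRingHom (𝓞 K))
    obtain ⟨a, b, hab⟩ := hcop
    refine h𝔭.ne_top ((Ideal.eq_top_iff_one _).mpr (hab ▸ ?_))
    simpa using 𝔭.add_mem (𝔭.mul_mem_left a (absNorm_mem 𝔭)) (𝔭.mul_mem_left b h)
  have hpos : 0 < q := hq
  have : NeZero q := ⟨hpos.ne'⟩
  have : NeZero (((⟨q, hpos⟩ : ℕ+) : ℕ) : K) := ⟨Nat.cast_ne_zero.mpr hpos.ne'⟩
  have : NumberField (CyclotomicField (⟨q, hpos⟩ : ℕ+) K) :=
    IsCyclotomicExtension.numberField {q} K _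
  have : IsGalois K (CyclotomicField (⟨q, hpos⟩ : ℕ+) K) :=
    IsCyclotomicExtension.isGalois {q} K _
  obtain ⟨σ, hσ⟩ := (IsCyclotomicExtension.zeta_spec (⟨q, hpos⟩ : ℕ+) K
    (CyclotomicField (⟨q, hpos⟩ : ℕ+) K)).exists_autToPow_eq_absNorm 𝔭 h0 hn
  rw [Gq, dif_pos hpos]
  refine ⟨σ ^ m, Units.ext ?_⟩
  rw [map_pow, Units.val_pow_eq_pow_val, hσ, ← hu, map_pow, Nat.cast_pow]

/-- Parseval's identity for Dirichlet characters modulo `n`. -/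
theorem DirichletCharacter.sum_norm_sq_sum_mul {n : ℕ} [NeZero n] (f : (ZMod n)ˣ → ℂ) :
    ∑ χ : DirichletCharacter ℂ n, ‖∑ u : (ZMod n)ˣ, χ (u : ZMod n) * f u‖ ^ 2 =
      n.totient * ∑ u, ‖f u‖ ^ 2 := by
  apply Complex.ofReal_injective
  push_cast
  simp_rw [← Complex.conj_mul', map_sum, map_mul, Finset.sum_mul_sum]
  have hconj (χ : DirichletCharacter ℂ n) (u : (ZMod n)ˣ) :
      (starRingEnd ℂ) (χ (u : ZMod n)) = χ (u : ZMod n)⁻¹ := by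
    rw [starRingEnd_apply, MulChar.star_apply', MulChar.inv_apply, Ring.inverse_unit,
      ZMod.inv_coe_unit]
  rw [Finset.sum_comm, Finset.mul_sum]
  refine Finset.sum_congr rfl fun u _ ↦ ?_
  rw [Finset.sum_comm]
  calc ∑ v : (ZMod n)ˣ, ∑ χ : DirichletCharacter ℂ n,
        (starRingEnd ℂ) (χ (u : ZMod n)) * (starRingEnd ℂ) (f u) * (χ (v : ZMod n) * f v)
      = ∑ v : (ZMod n)ˣ, (if u = v then (n.totient : ℂ) else 0) *
          ((starRingEnd ℂ) (f u) * f v) := by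
        refine Finset.sum_congr rfl fun v _ ↦ ?_
        have h := DirichletCharacter.sum_char_inv_mul_char_eq ℂ u.isUnit (v : ZMod n)
        simp only [Units.val_inj] at h
        rw [← h, Finset.sum_mul]
        refine Finset.sum_congr rfl fun χ _ ↦ ?_
        rw [hconj]
        ring
    _ = _ := by simp

/-- There are finitely many ideals of `𝓞 K` of norm at most `x`. -/
theorem finite_setOf_absNorm_le_real (K : Type*) [Field K] [NumberField K] (x : ℝ) :
    {𝔞 : Ideal (𝓞 K) | (absNorm 𝔞 : ℝ) ≤ x}.Finite :=
  (finite_setOfPred_absNorm_le ⌊x⌋₊).subset fun _ h ↦ Nat.le_floor h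

theorem psiK_eq_sum (K : Type*) [Field K] [NumberField K] (x : ℝ) (q : ℕ) (a : ZMod q) :
    psiK K x q a = ∑ 𝔞 ∈ (finite_setOf_absNorm_le_real K x).toFinset,
      if (absNorm 𝔞 : ZMod q) = a then LambdaK K 𝔞 else 0 := by
  rw [psiK, tsum_eq_sum (s := (finite_setOf_absNorm_le_real K x).toFinset)]
  · refine Finset.sum_congr rfl fun 𝔞 h𝔞 ↦ ?_
    rw [Set.Finite.mem_toFinset, Set.mem_ofPred_eq] at h𝔞
    simp only [h𝔞, true_and]
  · intro 𝔞 h𝔞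
    rw [Set.Finite.mem_toFinset, Set.mem_ofPred_eq] at h𝔞
    simp only [h𝔞, false_and, if_false]

theorem psiKChi_eq_sum (K : Type*) [Field K] [NumberField K] (x : ℝ) {q : ℕ}
    (χ : DirichletCharacter ℂ q) :
    psiKChi K x χ = ∑ 𝔞 ∈ (finite_setOf_absNorm_le_real K x).toFinset,
      χ (absNorm 𝔞 : ZMod q) * (LambdaK K 𝔞 : ℂ) := by
  rw [psiKChi, tsum_eq_sum (s := (finite_setOf_absNorm_le_real K x).toFinset)]
  · refine Finset.sum_congr rfl fun 𝔞 h𝔞 ↦ ?_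
    rw [Set.Finite.mem_toFinset, Set.mem_ofPred_eq] at h𝔞
    rw [if_pos h𝔞]
  · intro 𝔞 h𝔞
    rw [Set.Finite.mem_toFinset, Set.mem_ofPred_eq] at h𝔞
    rw [if_neg h𝔞]

/-- `ψ_K(x, χ∘N)` is the sum of `χ(u) ψ_K(x; q, u)` over the units `u` modulo `q`. -/
theorem psiKChi_eq_sum_units (K : Type*) [Field K] [NumberField K] (x : ℝ) {q : ℕ} [NeZero q]
    (χ : DirichletCharacter ℂ q) :
    psiKChi K x χ = ∑ u : (ZMod q)ˣ, χ (u : ZMod q) * (psiK K x q (u : ZMod q) : ℂ) := by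
  simp_rw [psiKChi_eq_sum, psiK_eq_sum, Complex.ofReal_sum, Finset.mul_sum]
  rw [Finset.sum_comm]
  refine Finset.sum_congr rfl fun 𝔞 _ ↦ ?_
  by_cases h : IsUnit (absNorm 𝔞 : ZMod q)
  · obtain ⟨v, hv⟩ := h
    rw [← hv, Finset.sum_eq_single v]
    · simp
    · intro u _ huv
      rw [if_neg fun h ↦ huv (Units.ext h).symm, Complex.ofReal_zero, mul_zero]
    · simp
  · rw [χ.map_nonunit h, zero_mul, Finset.sum_eq_zero]
    intro u _
    rw [if_neg fun hu : (absNorm 𝔞 : ZMod q) = u ↦ h (hu ▸ u.isUnit), Complex.ofReal_zero, mul_zero]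

theorem psiK_eq_zero_of_notMem_Gq (K : Type*) [Field K] [NumberField K] (x : ℝ) {q : ℕ}
    (hq : 1 ≤ q) {u : (ZMod q)ˣ} (hu : u ∉ Gq K q) : psiK K x q (u : ZMod q) = 0 := by
  rw [psiK_eq_sum, Finset.sum_eq_zero]
  intro 𝔞 _
  split_ifs with h
  · rw [LambdaK, if_neg fun h𝔞 ↦ hu (h𝔞.mem_Gq_of_absNorm_eq hq h)]
  · rfl

/-- Orthogonality relation for the restriction of a Dirichlet character to a subgroup. -/
theorem DirichletCharacter.sum_subgroup_eq {n : ℕ} [NeZero n] (χ : DirichletCharacter ℂ n)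
    (H : Subgroup (ZMod n)ˣ) :
    ∑ u : (ZMod n)ˣ, (if u ∈ H then χ (u : ZMod n) else 0) =
      if ∀ a ∈ H, χ (a : ZMod n) = 1 then (Nat.card H : ℂ) else 0 := by
  have h := sum_hom_units (((χ : ZMod n →* ℂ).comp (Units.coeHom (ZMod n))).comp H.subtype)
  have hiff : ((χ : ZMod n →* ℂ).comp (Units.coeHom (ZMod n))).comp H.subtype = 1 ↔
      ∀ a ∈ H, χ (a : ZMod n) = 1 := by
    simp [MonoidHom.ext_iff]
  simp only [hiff, ← Nat.card_eq_fintype_card, Nat.cast_ite, Nat.cast_zero] at h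
  rw [← h, ← Finset.sum_filter]
  exact Finset.sum_subtype _ (by simp) _

/-- `ψ'_K(x, χ∘N)` is the Fourier transform of the error term, extended by zero outside `G_q`. -/
theorem psiKChi'_eq_sum_units (K : Type*) [Field K] [NumberField K] (x : ℝ) {q : ℕ} [NeZero q]
    (χ : DirichletCharacter ℂ q) :
    psiKChi' K x χ = ∑ u : (ZMod q)ˣ, χ (u : ZMod q) *
      ((if u ∈ Gq K q then psiK K x q (u : ZMod q) - x / phiK K q else 0 : ℝ) : ℂ) := by
  have hq : 1 ≤ q := NeZero.one_le
  have hphi : (phiK K q : ℂ) ≠ 0 := Nat.cast_ne_zero.mpr Nat.card_pos.ne'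
  have hsum : psiKChi' K x χ = psiKChi K x χ -
      (x / phiK K q : ℂ) * ∑ u : (ZMod q)ˣ, (if u ∈ Gq K q then χ (u : ZMod q) else 0) := by
    rw [DirichletCharacter.sum_subgroup_eq, psiKChi']
    split_ifs
    · rw [← phiK, div_mul_cancel₀ _ hphi]
    · rw [mul_zero, sub_zero]
  rw [hsum, psiKChi_eq_sum_units, Finset.mul_sum, ← Finset.sum_sub_distrib]
  refine Finset.sum_congr rfl fun u _ ↦ ?_
  split_ifs with hu
  · push_cast
    ring
  · simp [psiK_eq_zero_of_notMem_Gq K x hq hu]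

/-- **Orthogonality identity.**
For every `q ≥ 1` and `x > 0`,
`∑_{a ∈ G_q} (ψ_K(x;q,a) − x/φ_K(q))² = (1/φ(q)) ∑_{χ mod q} |ψ'_K(x, χ∘N)|²`. -/
theorem sum_sq_error_eq_char_sum (K : Type*) [Field K] [NumberField K] [IsGalois ℚ K]
    (q : ℕ) (hq : 1 ≤ q) (x : ℝ) (hx : 0 < x) :
    ∑ᶠ a ∈ Gq K q, (psiK K x q (a : ZMod q) - x / phiK K q) ^ 2 =
      (1 / q.totient : ℝ) * ∑ᶠ χ : DirichletCharacter ℂ q, ‖psiKChi' K x χ‖ ^ 2 := by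
  have : NeZero q := ⟨Nat.one_le_iff_ne_zero.mp hq⟩
  have htot : (q.totient : ℝ) ≠ 0 := Nat.cast_ne_zero.mpr (Nat.totient_pos.mpr hq).ne'
  rw [finsum_eq_sum_of_fintype, finsum_eq_sum_of_fintype]
  simp_rw [psiKChi'_eq_sum_units]
  rw [DirichletCharacter.sum_norm_sq_sum_mul, one_div, inv_mul_cancel_left₀ htot]
  refine Finset.sum_congr rfl fun u _ ↦ ?_
  rw [Complex.norm_real, Real.norm_eq_abs, sq_abs, finsum_eq_if]
  split_ifs
  · rfl
  · norm_num
end
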